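/- Let m, n be positive integers, let 0 ≤ k ≤ m, and let a ∈ D_{m−k} be ENF-good with respect to (m,n), i.e., π(a)·(a_{m−k})^{k+1} ≤ n^{m+1} when m − k ≥ 1 (no condition when a is the empty word). Set γ_{m,n}(a) = (n^{m+1}/π(a))^{1/(k+1)}. Then X_{m,a} can be covered by at most ((3k+1)·γ_{m,n}(a))^k closed intervals of length n^{−(m+1)}. -/

import Mathlib

open Set

/-- `f(a₁ ⋯ a_k) = Σ_{i=1}^k 1/(a₁a₂⋯aᵢ)`, the value of an Engel fraction,
with `f(∅) = 0`. -/
noncomputable def engelVal : List ℕ → ℝ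
  | [] => 0
  | a :: t => (1 + engelVal t) / (a : ℝ)

/-- A nondecreasing word of positive integers (a member of `D_k` when of length `k`). -/
def isEngelWord (a : List ℕ) : Prop := (∀ x ∈ a, 1 ≤ x) ∧ List.Pairwise (· ≤ ·) a

/-- `X_{m,a} = {f(b) : b ∈ S_{m,a}}`, where `S_{m,a}` is the set of nondecreasing words
of positive integers of length at most `m` having `a` as a prefix. -/
def Xset (m : ℕ) (a : List ℕ) : Set ℝ :=
  {x : ℝ | ∃ b : List ℕ, isEngelWord b ∧ a <+: b ∧ b.length ≤ m ∧ x = engelVal b}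

/-- `Ω` can be covered by at most `B` closed intervals of length `r`. -/
def CoveredBy (Ω : Set ℝ) (r B : ℝ) : Prop :=
  ∃ t : Finset ℝ, (t.card : ℝ) ≤ B ∧ Ω ⊆ ⋃ c ∈ t, Set.Icc c (c + r)

/-!
Prepending a word `a` acts on Engel values by the affine contraction `z ↦ f(a) + z / π(a)`.
Hence `X_{m,a}` lies in a copy of `X_{k,∅}` shrunk by `π(a)`, and it is enough to cover `X_{k,∅}`
at an arbitrary scale `R⁻¹` with `R ≥ 1`, by induction on `k`.

For the step from `k` to `k + 1` put `γ = R^{1/(k+2)}`. Words all of whose letters exceed `γ` have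
values in `[0, 1/⌊γ⌋]`, which costs at most `3 γ^{k+1}` intervals. Words with first letter `x ≤ γ`
are covered by the induction hypothesis at scale `(R/x)⁻¹`, and `Σ_{x ≤ γ} x^{s-1} ≤ γ^s / s` with
`s = 1/(k+1)` bounds their total cost by `(3k+1)^k (k+1) γ^{k+1}`.
-/

namespace CoveredBy

variable {Ω Ω' : Set ℝ} {r B B' : ℝ}

lemma mono (h : CoveredBy Ω r B) (hΩ : Ω' ⊆ Ω) (hB : B ≤ B') : CoveredBy Ω' r B' := by
  obtain ⟨t, ht, hcover⟩ := h
  exact ⟨t, ht.trans hB, hΩ.trans hcover⟩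

lemma union (h : CoveredBy Ω r B) (h' : CoveredBy Ω' r B') : CoveredBy (Ω ∪ Ω') r (B + B') := by
  classical
  obtain ⟨t, ht, hcover⟩ := h
  obtain ⟨t', ht', hcover'⟩ := h'
  refine ⟨t ∪ t', ?_, ?_⟩
  · calc ((t ∪ t').card : ℝ) ≤ t.card + t'.card := mod_cast Finset.card_union_le t t'
      _ ≤ B + B' := add_le_add ht ht'
  · rw [Finset.set_biUnion_union]
    exact union_subset_union hcover hcover'

lemma biUnion {ι : Type*} (s : Finset ι) {Ω : ι → Set ℝ} {B : ι → ℝ}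
    (h : ∀ i ∈ s, CoveredBy (Ω i) r (B i)) : CoveredBy (⋃ i ∈ s, Ω i) r (∑ i ∈ s, B i) := by
  classical
  induction s using Finset.induction_on with
  | empty => exact ⟨∅, by simp, by simp⟩
  | insert i s hi ih =>
    rw [Finset.sum_insert hi, Finset.set_biUnion_insert]
    exact (h i (Finset.mem_insert_self i s)).union
      (ih fun j hj => h j (Finset.mem_insert_of_mem hj))

lemma image_affine (h : CoveredBy Ω r B) (s : ℝ) {c : ℝ} (hc : 0 ≤ c) :
    CoveredBy ((fun z => s + c * z) '' Ω) (c * r) B := by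
  classical
  obtain ⟨t, ht, hcover⟩ := h
  refine ⟨t.image fun z => s + c * z, le_trans (mod_cast Finset.card_image_le) ht, ?_⟩
  rintro _ ⟨z, hz, rfl⟩
  obtain ⟨u, hu, huz, hzu⟩ := mem_iUnion₂.1 (hcover hz)
  refine mem_iUnion₂.2 ⟨s + c * u, Finset.mem_image_of_mem _ hu, ?_, ?_⟩
  · exact add_le_add_right (mul_le_mul_of_nonneg_left huz hc) s
  · calc s + c * z ≤ s + c * (u + r) := by gcongr
      _ = s + c * u + c * r := by ring

end CoveredBy

lemma coveredBy_Icc {a b r : ℝ} (hab : a ≤ b) (hr : 0 < r) :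
    CoveredBy (Icc a b) r ((b - a) / r + 1) := by
  classical
  set N : ℕ := ⌊(b - a) / r⌋₊
  refine ⟨(Finset.range (N + 1)).image fun i : ℕ => a + i * r, ?_, ?_⟩
  · calc (((Finset.range (N + 1)).image fun i : ℕ => a + i * r).card : ℝ)
        ≤ ((Finset.range (N + 1)).card : ℝ) := mod_cast Finset.card_image_le
      _ = N + 1 := by rw [Finset.card_range, Nat.cast_add_one]
      _ ≤ (b - a) / r + 1 := by
          gcongr
          exact Nat.floor_le (div_nonneg (sub_nonneg.2 hab) hr.le)
  · rintro x ⟨hax, hxb⟩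
    set i : ℕ := ⌊(x - a) / r⌋₊
    have hiN : i ≤ N := Nat.floor_le_floor (by gcongr)
    have hi_le : (i : ℝ) * r ≤ x - a :=
      (le_div_iff₀ hr).1 (Nat.floor_le (div_nonneg (sub_nonneg.2 hax) hr.le))
    have hi_lt : x - a < (i + 1) * r := (div_lt_iff₀ hr).1 (Nat.lt_floor_add_one _)
    refine mem_iUnion₂.2 ⟨a + i * r, Finset.mem_image_of_mem _ ?_, ?_, ?_⟩
    · exact Finset.mem_range.2 (Nat.lt_succ_of_le hiN)
    · linarith
    · linarith

lemma engelVal_nonneg (c : List ℕ) : 0 ≤ engelVal c := by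
  induction c with
  | nil => exact le_rfl
  | cons x t ih =>
    rw [engelVal]
    positivity

lemma engelVal_append (a c : List ℕ) :
    engelVal (a ++ c) = engelVal a + (a.prod : ℝ)⁻¹ * engelVal c := by
  induction a with
  | nil => simp [engelVal]
  | cons x t ih =>
    rw [List.cons_append, engelVal, engelVal, ih, List.prod_cons, Nat.cast_mul, mul_inv]
    ring

-- `1 / M` is the sum of the geometric series `Σ (M + 1)^{-i}` over `i ≥ 1`.
lemma engelVal_le_one_div {M : ℕ} (hM : 0 < M) {c : List ℕ} (hc : ∀ x ∈ c, M < x) :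
    engelVal c ≤ 1 / M := by
  have hM' : (0 : ℝ) < M := mod_cast hM
  induction c with
  | nil => exact one_div_nonneg.2 hM'.le
  | cons x t ih =>
    obtain ⟨hx, ht⟩ := List.forall_mem_cons.1 hc
    have hx' : (M : ℝ) + 1 ≤ x := mod_cast hx
    rw [engelVal, div_le_iff₀ (by linarith)]
    calc 1 + engelVal t ≤ 1 + 1 / (M : ℝ) := by gcongr; exact ih ht
      _ = 1 / (M : ℝ) * (M + 1) := by field_simp
      _ ≤ 1 / (M : ℝ) * x := by gcongr

lemma isEngelWord.prod_pos {a : List ℕ} (ha : isEngelWord a) : 0 < a.prod :=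
  List.prod_pos ha.1

lemma isEngelWord.of_append_right {a c : List ℕ} (h : isEngelWord (a ++ c)) : isEngelWord c :=
  ⟨fun x hx => h.1 x (List.mem_append_right a hx), (List.pairwise_append.1 h.2).2.1⟩

lemma isEngelWord.prod_le_of_prod_mul_getLast_pow_le {a : List ℕ} (ha : isEngelWord a) {j : ℕ}
    {R : ℝ} (hR : 1 ≤ R) (h : ∀ hne : a ≠ [], (a.prod : ℝ) * (a.getLast hne : ℝ) ^ j ≤ R) :
    (a.prod : ℝ) ≤ R := by
  rcases eq_or_ne a [] with rfl | hne
  · simpa using hR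
  · have hlast : (1 : ℝ) ≤ a.getLast hne := mod_cast ha.1 _ (List.getLast_mem hne)
    exact (le_mul_of_one_le_right (Nat.cast_nonneg _) (one_le_pow₀ hlast)).trans (h hne)

lemma Xset_subset_image {m k : ℕ} {a : List ℕ} (hlen : m ≤ a.length + k) :
    Xset m a ⊆ (fun z => engelVal a + (a.prod : ℝ)⁻¹ * z) '' Xset k [] := by
  rintro _ ⟨_, hb, ⟨c, rfl⟩, hbm, rfl⟩
  rw [List.length_append] at hbm
  exact ⟨engelVal c, ⟨c, hb.of_append_right, List.nil_prefix, by omega, rfl⟩,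
    (engelVal_append a c).symm⟩

lemma CoveredBy.Xset_of_nil {m k : ℕ} {a : List ℕ} (ha : isEngelWord a)
    (hlen : m ≤ a.length + k) {R B : ℝ} (h : CoveredBy (Xset k []) (R / a.prod)⁻¹ B) :
    CoveredBy (Xset m a) R⁻¹ B := by
  have hprod : (a.prod : ℝ) ≠ 0 := mod_cast ha.prod_pos.ne'
  have hscale : (a.prod : ℝ)⁻¹ * (R / a.prod)⁻¹ = R⁻¹ := by
    rw [← mul_inv, mul_div_cancel₀ R hprod]
  have himage := h.image_affine (engelVal a) (inv_nonneg.2 (Nat.cast_nonneg a.prod))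
  rw [hscale] at himage
  exact himage.mono (Xset_subset_image hlen) le_rfl

lemma Xset_nil_subset (m : ℕ) {M : ℕ} (hM : 0 < M) :
    Xset m [] ⊆ (⋃ x ∈ Finset.Icc 1 M, Xset m [x]) ∪ Icc 0 (1 / (M : ℝ)) := by
  rintro _ ⟨b, hb, -, hbm, rfl⟩
  by_cases hlarge : ∀ y ∈ b, M < y
  · exact Or.inr ⟨engelVal_nonneg b, engelVal_le_one_div hM hlarge⟩
  · left
    rcases b with _ | ⟨x, t⟩
    · simp at hlarge
    · have hxt : ∀ y ∈ t, x ≤ y := (List.pairwise_cons.1 hb.2).1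
      have hxM : x ≤ M := by
        by_contra! hMx
        exact hlarge (List.forall_mem_cons.2 ⟨hMx, fun y hy => hMx.trans_le (hxt y hy)⟩)
      exact mem_iUnion₂.2 ⟨x, Finset.mem_Icc.2 ⟨hb.1 x List.mem_cons_self, hxM⟩,
        x :: t, hb, ⟨t, rfl⟩, hbm, rfl⟩

section PowerSums

variable {s : ℝ}

lemma mul_rpow_sub_one_le (hs₀ : 0 ≤ s) (hs₁ : s ≤ 1) {x : ℝ} (hx : 1 ≤ x) :
    s * x ^ (s - 1) ≤ x ^ s - (x - 1) ^ s := by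
  have hx₀ : 0 < x := by linarith
  have hinv : x⁻¹ ≤ 1 := inv_le_one_of_one_le₀ hx
  have hbernoulli : (1 + -x⁻¹) ^ s ≤ 1 + s * -x⁻¹ :=
    rpow_one_add_le_one_add_mul_self (by linarith) hs₀ hs₁
  have hpow : (x - 1) ^ s ≤ x ^ s * (1 + s * -x⁻¹) :=
    calc (x - 1) ^ s = (x * (1 + -x⁻¹)) ^ s := by
          congr 1
          field_simp
          ring
      _ = x ^ s * (1 + -x⁻¹) ^ s := Real.mul_rpow hx₀.le (by linarith)
      _ ≤ x ^ s * (1 + s * -x⁻¹) := by gcongr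
  rw [Real.rpow_sub_one hx₀.ne', div_eq_mul_inv]
  linarith

lemma sum_Icc_rpow_sub_one_le (hs₀ : 0 < s) (hs₁ : s ≤ 1) (M : ℕ) :
    ∑ x ∈ Finset.Icc 1 M, (x : ℝ) ^ (s - 1) ≤ (M : ℝ) ^ s / s := by
  rw [le_div_iff₀' hs₀]
  induction M with
  | zero => simp [Real.zero_rpow hs₀.ne']
  | succ M ih =>
    have hstep := mul_rpow_sub_one_le hs₀.le hs₁ (x := (M + 1 : ℕ)) (by simp)
    rw [Nat.cast_add_one, add_sub_cancel_right] at hstep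
    rw [Finset.sum_Icc_succ_top (by omega), mul_add, Nat.cast_add_one]
    linarith

lemma sum_Icc_floor_div_rpow_le (hs₀ : 0 < s) (hs₁ : s ≤ 1) {R γ : ℝ} (hR : 0 ≤ R)
    (hγ : 0 ≤ γ) :
    ∑ x ∈ Finset.Icc 1 ⌊γ⌋₊, (R / x) ^ (1 - s) ≤ R ^ (1 - s) * (γ ^ s / s) :=
  calc ∑ x ∈ Finset.Icc 1 ⌊γ⌋₊, (R / x) ^ (1 - s)
      = R ^ (1 - s) * ∑ x ∈ Finset.Icc 1 ⌊γ⌋₊, (x : ℝ) ^ (s - 1) := by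
        rw [Finset.mul_sum]
        refine Finset.sum_congr rfl fun x _ => ?_
        rw [Real.div_rpow hR x.cast_nonneg, div_eq_mul_inv, ← Real.rpow_neg x.cast_nonneg, neg_sub]
    _ ≤ R ^ (1 - s) * ((⌊γ⌋₊ : ℝ) ^ s / s) := by
        gcongr
        exact sum_Icc_rpow_sub_one_le hs₀ hs₁ _
    _ ≤ R ^ (1 - s) * (γ ^ s / s) := by
        gcongr
        exact Nat.floor_le hγ

end PowerSums

lemma sum_Icc_floor_root_pow_le (k : ℕ) {γ : ℝ} (hγ : 0 < γ) :
    ∑ x ∈ Finset.Icc 1 ⌊γ⌋₊, ((γ ^ (k + 2) / x) ^ ((1 : ℝ) / (k + 1))) ^ k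
      ≤ (k + 1) * γ ^ (k + 1) := by
  set s : ℝ := 1 / (k + 1) with hs
  have hs₀ : 0 < s := by positivity
  have hsk : s * (k + 1) = 1 := by rw [hs]; field_simp
  have hs₁ : s ≤ 1 := by rw [← hsk]; exact le_mul_of_one_le_right hs₀.le (by simp)
  have hroot (y : ℝ) (hy : 0 ≤ y) : (y ^ s) ^ k = y ^ (1 - s) := by
    rw [← Real.rpow_mul_natCast hy]
    congr 1
    linarith
  calc ∑ x ∈ Finset.Icc 1 ⌊γ⌋₊, ((γ ^ (k + 2) / x) ^ s) ^ k
      = ∑ x ∈ Finset.Icc 1 ⌊γ⌋₊, (γ ^ (k + 2) / x) ^ (1 - s) :=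
        Finset.sum_congr rfl fun x _ => hroot _ (by positivity)
    _ ≤ (γ ^ (k + 2)) ^ (1 - s) * (γ ^ s / s) :=
        sum_Icc_floor_div_rpow_le hs₀ hs₁ (by positivity) hγ.le
    _ = 1 / s * (γ ^ ((k + 2 : ℕ) * (1 - s)) * γ ^ s) := by
        rw [Real.rpow_natCast_mul hγ.le]
        ring
    _ = 1 / s * γ ^ (k + 1) := by
        rw [← Real.rpow_add hγ, ← Real.rpow_natCast γ (k + 1)]
        congr 2
        push_cast
        linarith
    _ = (k + 1) * γ ^ (k + 1) := by rw [hs, one_div_one_div]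

lemma coveredBy_iUnion_Xset_singleton {k : ℕ} {C γ : ℝ} (hC : 0 ≤ C) (hγ : 1 ≤ γ)
    (h : ∀ R : ℝ, 1 ≤ R → CoveredBy (Xset k []) R⁻¹ ((C * R ^ ((1 : ℝ) / (k + 1))) ^ k)) :
    CoveredBy (⋃ x ∈ Finset.Icc 1 ⌊γ⌋₊, Xset (k + 1) [x]) (γ ^ (k + 2))⁻¹
      (C ^ k * ((k + 1) * γ ^ (k + 1))) := by
  have hletter : ∀ x ∈ Finset.Icc 1 ⌊γ⌋₊, CoveredBy (Xset (k + 1) [x]) (γ ^ (k + 2))⁻¹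
      (C ^ k * ((γ ^ (k + 2) / x) ^ ((1 : ℝ) / (k + 1))) ^ k) := by
    intro x hx
    obtain ⟨hx₁, hxγ⟩ := Finset.mem_Icc.1 hx
    have hxγ' : (x : ℝ) ≤ γ := (Nat.le_floor_iff (by linarith)).1 hxγ
    have hscale : 1 ≤ γ ^ (k + 2) / x := by
      rw [one_le_div (mod_cast hx₁)]
      exact hxγ'.trans (le_self_pow₀ hγ (by omega))
    have hword : isEngelWord [x] := ⟨by simpa using hx₁, List.pairwise_singleton _ x⟩
    refine CoveredBy.Xset_of_nil (k := k) hword (by simp [add_comm]) ?_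
    rw [List.prod_singleton, ← mul_pow]
    exact h _ hscale
  refine (CoveredBy.biUnion _ hletter).mono Subset.rfl ?_
  rw [← Finset.mul_sum]
  gcongr
  exact sum_Icc_floor_root_pow_le k (by linarith)

lemma coveredBy_Icc_zero_one_div_floor (k : ℕ) {γ : ℝ} (hγ : 1 ≤ γ) :
    CoveredBy (Icc 0 (1 / (⌊γ⌋₊ : ℝ))) (γ ^ (k + 2))⁻¹ (3 * γ ^ (k + 1)) := by
  have hscale : 0 < (γ ^ (k + 2))⁻¹ := inv_pos.2 (pow_pos (by linarith) _)
  have hfloor : (1 : ℝ) ≤ ⌊γ⌋₊ := mod_cast (Nat.one_le_floor_iff γ).2 hγ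
  have hγ_le : γ ≤ 2 * ⌊γ⌋₊ := by linarith [Nat.lt_floor_add_one γ]
  have hinterval : 1 / (⌊γ⌋₊ : ℝ) * γ ^ (k + 2) ≤ 2 * γ ^ (k + 1) := by
    rw [one_div_mul_eq_div, div_le_iff₀ (by linarith)]
    calc γ ^ (k + 2) = γ ^ (k + 1) * γ := pow_succ γ (k + 1)
      _ ≤ γ ^ (k + 1) * (2 * ⌊γ⌋₊) := by gcongr
      _ = 2 * γ ^ (k + 1) * ⌊γ⌋₊ := by ring
  refine (coveredBy_Icc (by positivity) hscale).mono Subset.rfl ?_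
  rw [sub_zero, div_inv_eq_mul]
  linarith [one_le_pow₀ hγ (n := k + 1)]

lemma three_mul_add_one_pow_mul_add_three_le (k : ℕ) :
    (3 * (k : ℝ) + 1) ^ k * (k + 1) + 3 ≤ (3 * (k + 1 : ℕ) + 1) ^ (k + 1) := by
  have hk : (0 : ℝ) ≤ k := k.cast_nonneg
  have hbase : (1 : ℝ) ≤ (3 * (k : ℝ) + 4) ^ k := one_le_pow₀ (by linarith)
  calc (3 * (k : ℝ) + 1) ^ k * (k + 1) + 3
      ≤ (3 * (k : ℝ) + 4) ^ k * (k + 1) + 3 * (3 * (k : ℝ) + 4) ^ k := by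
        gcongr
        · norm_num
        · linarith
    _ = (3 * (k : ℝ) + 4) ^ k * (k + 4) := by ring
    _ ≤ (3 * (k : ℝ) + 4) ^ k * (3 * k + 4) := by gcongr; linarith [hk]
    _ = (3 * (k + 1 : ℕ) + 1) ^ (k + 1) := by push_cast; ring

lemma coveredBy_Xset_nil (k : ℕ) {R : ℝ} (hR : 1 ≤ R) :
    CoveredBy (Xset k []) R⁻¹ (((3 * (k : ℝ) + 1) * R ^ ((1 : ℝ) / (k + 1))) ^ k) := by
  induction k generalizing R with
  | zero =>
    refine ⟨{0}, by simp, ?_⟩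
    rintro _ ⟨b, -, -, hb, rfl⟩
    obtain rfl : b = [] := List.length_eq_zero_iff.1 (Nat.le_zero.1 hb)
    simp [engelVal, zero_le_one.trans hR]
  | succ k ih =>
    set γ : ℝ := R ^ ((1 : ℝ) / ((k + 1 : ℕ) + 1)) with hγ_def
    have hγ : 1 ≤ γ := Real.one_le_rpow hR (by positivity)
    have hγR : γ ^ (k + 2) = R := by
      rw [hγ_def, one_div, ← Nat.cast_add_one,
        Real.rpow_inv_natCast_pow (zero_le_one.trans hR) (by omega)]
    have hsmall := coveredBy_iUnion_Xset_singleton (by positivity) hγ fun _ hR' => ih hR'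
    have hlarge := coveredBy_Icc_zero_one_div_floor k hγ
    rw [← hγR]
    refine (hsmall.union hlarge).mono
      (Xset_nil_subset (k + 1) ((Nat.one_le_floor_iff γ).2 hγ)) ?_
    calc (3 * (k : ℝ) + 1) ^ k * ((k + 1) * γ ^ (k + 1)) + 3 * γ ^ (k + 1)
        = ((3 * (k : ℝ) + 1) ^ k * (k + 1) + 3) * γ ^ (k + 1) := by ring
      _ ≤ (3 * (k + 1 : ℕ) + 1) ^ (k + 1) * γ ^ (k + 1) := by
          gcongr
          exact three_mul_add_one_pow_mul_add_three_le k
      _ = ((3 * (k + 1 : ℕ) + 1) * γ) ^ (k + 1) := (mul_pow _ _ _).symm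

theorem engel_covering_count_general {m k : ℕ} {a : List ℕ} (hlen : m ≤ a.length + k)
    (haD : isEngelWord a) {R : ℝ} (hR : (a.prod : ℝ) ≤ R) :
    CoveredBy (Xset m a) R⁻¹
      (((3 * (k : ℝ) + 1) * (R / a.prod) ^ ((1 : ℝ) / (k + 1))) ^ k) :=
  .Xset_of_nil haD hlen (coveredBy_Xset_nil k ((one_le_div (mod_cast haD.prod_pos)).2 hR))

/-- Let `m, n ≥ 1`, `0 ≤ k ≤ m`, and let `a ∈ D_{m-k}` be ENF-good with respect to
`(m,n)`, i.e. `π(a)·(last a)^{k+1} ≤ n^{m+1}` (no condition when `a` is empty).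
With `γ_{m,n}(a) = (n^{m+1}/π(a))^{1/(k+1)}`, the set `X_{m,a}` can be covered by at
most `((3k+1)·γ_{m,n}(a))^k` closed intervals of length `n^{-(m+1)}`. -/
theorem engel_covering_count (m n : ℕ) (hm : 0 < m) (hn : 0 < n) (k : ℕ) (hk : k ≤ m)
    (a : List ℕ) (hlen : a.length = m - k) (haD : isEngelWord a)
    (hgood : ∀ h : a ≠ [], (a.prod : ℝ) * (a.getLast h : ℝ) ^ (k + 1) ≤ (n : ℝ) ^ (m + 1)) :
    CoveredBy (Xset m a) (((n : ℝ) ^ (m + 1))⁻¹)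
      (((3 * (k : ℝ) + 1) *
        (((n : ℝ) ^ (m + 1) / (a.prod : ℝ)) ^ ((1 : ℝ) / ((k : ℝ) + 1)))) ^ k) := by
  have hscale : (1 : ℝ) ≤ (n : ℝ) ^ (m + 1) := one_le_pow₀ (mod_cast hn)
  exact engel_covering_count_general (by omega) haD
    (haD.prod_le_of_prod_mul_getLast_pow_le hscale hgood)
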